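/- Under the system model, for every l ∈ {1,…,L} and k ∈ {1,…,K}, let ĥ_{jlk}(t) = λ_{jlk} Σ_{b=1}^{B} c_b y_j(b) with (c_1,…,c_B) = x̃_{lk}ᴴ D_{δ(t)} Ψ_j⁻¹ be the LMMSE estimate of h_{jlk}(t). Then the error covariance matrix satisfies E[(h_{jlk}(t) − ĥ_{jlk}(t))(h_{jlk}(t) − ĥ_{jlk}(t))ᴴ] = λ_{jlk} (1 − λ_{jlk} x̃_{lk}ᴴ D_{δ(t)} Ψ_j⁻¹ D_{δ(t)}ᴴ x̃_{lk}) · I_N, and consequently the mean squared error equals E[‖h_{jlk}(t) − ĥ_{jlk}(t)‖²] = N λ_{jlk} (1 − λ_{jlk} x̃_{lk}ᴴ D_{δ(t)} Ψ_j⁻¹ D_{δ(t)}ᴴ x̃_{lk}). -/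

import Mathlib

open MeasureTheory ProbabilityTheory Matrix Complex
open scoped ProbabilityTheory Kronecker

/-- Deterministic phase-drift damping matrix
`D_{δ(t)} = diag(e^{−δ(t−1)/2}, …, e^{−δ(t−B)/2})`; the `b`-th diagonal entry
(`b : Fin B`, corresponding to pilot time `b+1`) is `e^{−δ(t−(b+1))/2}`. -/
noncomputable def Dmat (δ : ℝ) (t B : ℕ) : Matrix (Fin B) (Fin B) ℂ :=
  Matrix.diagonal fun b => (Real.exp (-(δ / 2) * ((t : ℝ) - ((b : ℕ) + 1))) : ℂ)

/-- Deterministic pilot matrix `X_{ℓm}` built from the pilot sequence `xv`: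
diagonal entries `|x(b)|²(1+κ²)` and off-diagonal entries `x(b₁)x(b₂)* e^{−δ|b₁−b₂|/2}`. -/
noncomputable def Xmat {B : ℕ} (κ δ : ℝ) (xv : Fin B → ℂ) : Matrix (Fin B) (Fin B) ℂ :=
  Matrix.of fun b₁ b₂ =>
    if b₁ = b₂ then ((Complex.normSq (xv b₁) * (1 + κ ^ 2) : ℝ) : ℂ)
    else xv b₁ * star (xv b₂) * (Real.exp (-(δ / 2) * |((b₁ : ℕ) : ℝ) - ((b₂ : ℕ) : ℝ)|) : ℂ)

/-- Deterministic matrix `Ψ_j = Σ_ℓ Σ_m λ_{jℓm} X_{ℓm} + σ²ξ I_B`. -/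
noncomputable def PsiMat {B L K : ℕ} (lam : Fin L → Fin K → ℝ) (σ2 ξ κ δ : ℝ)
    (x : Fin L → Fin K → Fin B → ℂ) : Matrix (Fin B) (Fin B) ℂ :=
  (∑ l, ∑ m, ((lam l m : ℝ) : ℂ) • Xmat κ δ (x l m)) + ((σ2 * ξ : ℝ) : ℂ) • 1

/-- The uplink massive MIMO system model at base station `j`, on the probability space `Ω`,
with `N` antennas, pilot length `B`, `L` cells, `K` users per cell, channel attenuations
`lam l k = λ_{jlk}`, noise variance `σ2 = σ²`, noise amplification `ξ`, distortion parameter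
`κ`, phase-drift variance `δ`, and deterministic pilot sequences `x l k : Fin B → ℂ`
(pilot time `b+1` for `b : Fin B`).  All underlying real random sources are mutually
independent: channel real/imaginary parts `hRe, hIm ~ N(0, λ_{jlk}/2)` (so the channel
coefficients are `CN(0, λ_{jlk})`), phase-drift increments `dphi n u ~ N(0, δ)` (`u ≥ 1`),
distortion real/imaginary parts `zRe, zIm ~ N(0, 1/2)` (so `z ~ CN(0,1)`), and receiver-noise
real/imaginary parts `etaRe, etaIm ~ N(0, σ²ξ/2)` (so `η ~ CN(0, σ²ξ)`). -/
structure MIMOModel (Ω : Type*) [MeasureSpace Ω] (N B L K : ℕ)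
    (lam : Fin L → Fin K → ℝ) (σ2 ξ κ δ : ℝ) (x : Fin L → Fin K → Fin B → ℂ) where
  hRe : Fin L → Fin K → Fin N → Ω → ℝ
  hIm : Fin L → Fin K → Fin N → Ω → ℝ
  dphi : Fin N → ℕ → Ω → ℝ
  zRe : Fin N → ℕ → Ω → ℝ
  zIm : Fin N → ℕ → Ω → ℝ
  etaRe : Fin N → ℕ → Ω → ℝ
  etaIm : Fin N → ℕ → Ω → ℝ
  meas_hRe : ∀ l k n, Measurable (hRe l k n)
  meas_hIm : ∀ l k n, Measurable (hIm l k n)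
  meas_dphi : ∀ n u, Measurable (dphi n u)
  meas_zRe : ∀ n s, Measurable (zRe n s)
  meas_zIm : ∀ n s, Measurable (zIm n s)
  meas_etaRe : ∀ n s, Measurable (etaRe n s)
  meas_etaIm : ∀ n s, Measurable (etaIm n s)
  law_hRe : ∀ l k n, Measure.map (hRe l k n) ℙ = gaussianReal 0 (Real.toNNReal (lam l k / 2))
  law_hIm : ∀ l k n, Measure.map (hIm l k n) ℙ = gaussianReal 0 (Real.toNNReal (lam l k / 2))
  law_dphi : ∀ n u, Measure.map (dphi n u) ℙ = gaussianReal 0 (Real.toNNReal δ)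
  law_zRe : ∀ n s, Measure.map (zRe n s) ℙ = gaussianReal 0 (Real.toNNReal (1 / 2))
  law_zIm : ∀ n s, Measure.map (zIm n s) ℙ = gaussianReal 0 (Real.toNNReal (1 / 2))
  law_etaRe : ∀ n s, Measure.map (etaRe n s) ℙ = gaussianReal 0 (Real.toNNReal (σ2 * ξ / 2))
  law_etaIm : ∀ n s, Measure.map (etaIm n s) ℙ = gaussianReal 0 (Real.toNNReal (σ2 * ξ / 2))
  indep : iIndepFun (m := fun _ => (inferInstance : MeasurableSpace ℝ))
    (fun i : (Fin L × Fin K × Fin N × Bool) ⊕ (Fin N × ℕ) ⊕ (Fin N × ℕ × Bool) ⊕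
        (Fin N × ℕ × Bool) =>
      match i with
      | Sum.inl (l, k, n, false) => hRe l k n
      | Sum.inl (l, k, n, true) => hIm l k n
      | Sum.inr (Sum.inl (n, u)) => dphi n u
      | Sum.inr (Sum.inr (Sum.inl (n, s, false))) => zRe n s
      | Sum.inr (Sum.inr (Sum.inl (n, s, true))) => zIm n s
      | Sum.inr (Sum.inr (Sum.inr (n, s, false))) => etaRe n s
      | Sum.inr (Sum.inr (Sum.inr (n, s, true))) => etaIm n s) (ℙ : Measure Ω)

namespace MIMOModel

variable {Ω : Type*} [MeasureSpace Ω] {N B L K : ℕ} {lam : Fin L → Fin K → ℝ}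
  {σ2 ξ κ δ : ℝ} {x : Fin L → Fin K → Fin B → ℂ}

variable (M : MIMOModel Ω N B L K lam σ2 ξ κ δ x)

/-- Accumulated phase drift `φ_{jn}(s) = Σ_{u=1}^{s} Δ_{jn}(u)`. -/
noncomputable def phase (n : Fin N) (s : ℕ) (ω : Ω) : ℝ :=
  ∑ u ∈ Finset.Icc 1 s, M.dphi n u ω

/-- Channel coefficient `h_{jlk}^{(n)} ~ CN(0, λ_{jlk})`. -/
noncomputable def ch (l : Fin L) (k : Fin K) (n : Fin N) (ω : Ω) : ℂ :=
  Complex.mk (M.hRe l k n ω) (M.hIm l k n ω)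

/-- Distortion variable `z_{jn}(s) ~ CN(0,1)`. -/
noncomputable def z (n : Fin N) (s : ℕ) (ω : Ω) : ℂ :=
  Complex.mk (M.zRe n s ω) (M.zIm n s ω)

/-- Receiver noise `η_j^{(n)}(s) ~ CN(0, σ²ξ)`. -/
noncomputable def eta (n : Fin N) (s : ℕ) (ω : Ω) : ℂ :=
  Complex.mk (M.etaRe n s ω) (M.etaIm n s ω)

/-- Received pilot signal at antenna `n`, pilot time `b+1` (for `b : Fin B`):
`y_j^{(n)}(b) = e^{iφ_{jn}(b)} Σ_l Σ_m h_{jlm}^{(n)} x_{lm}(b)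
  + κ (Σ_l Σ_m |x_{lm}(b)|² |h_{jlm}^{(n)}|²)^{1/2} z_{jn}(b) + η_j^{(n)}(b)`. -/
noncomputable def y (n : Fin N) (b : Fin B) (ω : Ω) : ℂ :=
  Complex.exp (Complex.I * ((M.phase n ((b : ℕ) + 1) ω : ℝ) : ℂ))
      * ∑ l, ∑ m, M.ch l m n ω * x l m b
    + (κ : ℂ) * ((Real.sqrt (∑ l, ∑ m, Complex.normSq (x l m b)
        * Complex.normSq (M.ch l m n ω)) : ℝ) : ℂ) * M.z n ((b : ℕ) + 1) ω
    + M.eta n ((b : ℕ) + 1) ω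

/-- Effective channel at time `t`: `h_{jlk}(t)` has `n`-th entry `e^{iφ_{jn}(t)} h_{jlk}^{(n)}`. -/
noncomputable def hEff (l : Fin L) (k : Fin K) (t : ℕ) (n : Fin N) (ω : Ω) : ℂ :=
  Complex.exp (Complex.I * ((M.phase n t ω : ℝ) : ℂ)) * M.ch l k n ω

/-- LMMSE channel estimate `ĥ_{jlk}(t) = λ_{jlk} Σ_b c_b y_j(b)` with
`(c_1, …, c_B) = x̃_{lk}ᴴ D_{δ(t)} Ψ_j⁻¹`. -/
noncomputable def hHat (l : Fin L) (k : Fin K) (t : ℕ) (n : Fin N) (ω : Ω) : ℂ :=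
  ((lam l k : ℝ) : ℂ) * ∑ b,
    Matrix.vecMul (star (x l k)) (Dmat δ t B * (PsiMat lam σ2 ξ κ δ x)⁻¹) b * M.y n b ω

/-- Data-phase distortion noise `υ_j(t)` with `n`-th entry
`κ (Σ_l Σ_m p_{lm} |h_{jlm}^{(n)}|²)^{1/2} z_{jn}(t)`. -/
noncomputable def ups (p : Fin L → Fin K → ℝ) (t : ℕ) (n : Fin N) (ω : Ω) : ℂ :=
  (κ : ℂ) * ((Real.sqrt (∑ l, ∑ m, p l m * Complex.normSq (M.ch l m n ω)) : ℝ) : ℂ)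
    * M.z n t ω

/-- The uplink SINR of user `k` in cell `j` at time `t` with the MRC filter
`v_{jk}(t) = ĥ_{jjk}(t)`. -/
noncomputable def SINR (p : Fin L → Fin K → ℝ) (j : Fin L) (k : Fin K) (t : ℕ) : ℝ :=
  p j k * Complex.normSq (∫ ω, ∑ n, star (M.hHat j k t n ω) * M.hEff j k t n ω) /
    ((∑ l, ∑ m, p l m * ∫ ω, Complex.normSq (∑ n, star (M.hHat j k t n ω) * M.hEff l m t n ω))
      - p j k * Complex.normSq (∫ ω, ∑ n, star (M.hHat j k t n ω) * M.hEff j k t n ω)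
      + (∫ ω, Complex.normSq (∑ n, star (M.hHat j k t n ω) * M.ups p t n ω))
      + σ2 * ξ * ∫ ω, ∑ n, Complex.normSq (M.hHat j k t n ω))

end MIMOModel
set_option linter.unusedSectionVars false

theorem cgauss {Ω : Type*} [MeasureSpace Ω] [IsProbabilityMeasure (ℙ : Measure Ω)]
    {a b : Ω → ℝ} (ha : Measurable a) (hb : Measurable b) {v : ℝ} (hv : 0 ≤ v)
    (la : Measure.map a ℙ = gaussianReal 0 (Real.toNNReal (v / 2)))
    (lb : Measure.map b ℙ = gaussianReal 0 (Real.toNNReal (v / 2))) :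
    MemLp (fun ω => Complex.mk (a ω) (b ω)) 2 ℙ ∧ (∫ ω, Complex.mk (a ω) (b ω)) = 0 ∧
    (∫ ω, Complex.mk (a ω) (b ω) * star (Complex.mk (a ω) (b ω))) = (v : ℂ) := by
  have key : ∀ c : Ω → ℝ, Measurable c →
      Measure.map c ℙ = gaussianReal 0 (Real.toNNReal (v / 2)) →
      MemLp c 2 ℙ ∧ (∫ ω, c ω) = 0 ∧ (∫ ω, c ω ^ 2) = v / 2 := by
    intro c hc lc
    have hm : MemLp c 2 ℙ := by
      have h := memLp_id_gaussianReal (μ := 0) (v := Real.toNNReal (v / 2)) 2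
      rw [← lc] at h
      exact (memLp_map_measure_iff (by fun_prop) hc.aemeasurable).1 h
    have h0 : (∫ ω, c ω) = 0 := by
      have h := integral_id_gaussianReal (μ := 0) (v := Real.toNNReal (v / 2))
      rw [← lc, integral_map hc.aemeasurable (by fun_prop)] at h
      exact h
    refine ⟨hm, h0, ?_⟩
    have h := variance_id_gaussianReal (μ := 0) (v := Real.toNNReal (v / 2))
    rw [← lc, variance_map (by fun_prop) hc.aemeasurable] at h
    rw [Function.id_comp, variance_of_integral_eq_zero hc.aemeasurable h0] at h
    rw [h, Real.coe_toNNReal _ (by positivity)]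
  obtain ⟨a1, a2, a3⟩ := key a ha la
  obtain ⟨b1, b2, b3⟩ := key b hb lb
  have e : (fun ω => Complex.mk (a ω) (b ω)) = fun ω => (a ω : ℂ) + (b ω : ℂ) * I := by
    funext ω
    exact Complex.mk_eq_add_mul_I _ _
  refine ⟨?_, ?_, ?_⟩
  · rw [e]
    have A1 : MemLp (fun ω => (a ω : ℂ)) 2 ℙ := a1.ofReal
    have B1 : MemLp (fun ω => (b ω : ℂ)) 2 ℙ := b1.ofReal
    have B2 : MemLp (fun ω => (b ω : ℂ) * I) 2 ℙ := by
      simpa [mul_comm] using B1.const_mul I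
    exact A1.add B2
  · rw [e, integral_add, integral_mul_const, integral_complex_ofReal, integral_complex_ofReal,
      a2, b2]
    · simp
    · exact (a1.integrable (by norm_num)).ofReal
    · exact ((b1.integrable (by norm_num)).ofReal).mul_const I
  · have e2 : ∀ ω, Complex.mk (a ω) (b ω) * star (Complex.mk (a ω) (b ω))
        = ((a ω ^ 2 + b ω ^ 2 : ℝ) : ℂ) := by
      intro ω
      rw [← starRingEnd_apply, Complex.mul_conj, Complex.normSq_mk]
      congr 1
      ring
    simp_rw [e2]
    rw [integral_complex_ofReal, integral_add a1.integrable_sq b1.integrable_sq, a3, b3]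
    norm_num

namespace MIMOModel

variable {Ω : Type*} [MeasureSpace Ω] {N B L K : ℕ} {lam : Fin L → Fin K → ℝ}
  {σ2 ξ κ δ : ℝ} {x : Fin L → Fin K → Fin B → ℂ}

abbrev Idx (N L K : ℕ) := (Fin L × Fin K × Fin N × Bool) ⊕ (Fin N × ℕ) ⊕ (Fin N × ℕ × Bool) ⊕
        (Fin N × ℕ × Bool)

variable (M : MIMOModel Ω N B L K lam σ2 ξ κ δ x)

def src : Idx N L K → Ω → ℝ := fun i =>
  match i with
  | Sum.inl (l, k, n, false) => M.hRe l k n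
  | Sum.inl (l, k, n, true) => M.hIm l k n
  | Sum.inr (Sum.inl (n, u)) => M.dphi n u
  | Sum.inr (Sum.inr (Sum.inl (n, s, false))) => M.zRe n s
  | Sum.inr (Sum.inr (Sum.inl (n, s, true))) => M.zIm n s
  | Sum.inr (Sum.inr (Sum.inr (n, s, false))) => M.etaRe n s
  | Sum.inr (Sum.inr (Sum.inr (n, s, true))) => M.etaIm n s

theorem src_meas (i : Idx N L K) : Measurable (M.src i) := by
  rcases i with ⟨l, k, n, _ | _⟩ | ⟨n, u⟩ | ⟨n, s, _ | _⟩ | ⟨n, s, _ | _⟩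
  · exact M.meas_hRe l k n
  · exact M.meas_hIm l k n
  · exact M.meas_dphi n u
  · exact M.meas_zRe n s
  · exact M.meas_zIm n s
  · exact M.meas_etaRe n s
  · exact M.meas_etaIm n s

theorem src_indep : iIndepFun M.src (ℙ : Measure Ω) := M.indep

/-- sigma-algebra generated by the sources in `S`. -/
@[reducible]
def sig (S : Set (Idx N L K)) : MeasurableSpace Ω :=
  ⨆ i ∈ S, MeasurableSpace.comap (M.src i) inferInstance

theorem sig_le (S : Set (Idx N L K)) : M.sig S ≤ MeasureSpace.toMeasurableSpace :=
  iSup₂_le fun i _ => (M.src_meas i).comap_le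

theorem sig_mono {S T : Set (Idx N L K)} (h : S ⊆ T) : M.sig S ≤ M.sig T :=
  biSup_mono h

theorem src_sig {S : Set (Idx N L K)} {i : Idx N L K} (h : i ∈ S) : Measurable[M.sig S] (M.src i) := by
  rw [measurable_iff_comap_le]
  exact le_iSup₂_of_le i h le_rfl

theorem sig_indep {S T : Set (Idx N L K)} (h : Disjoint S T) {F G : Ω → ℂ}
    (hF : Measurable[M.sig S] F) (hG : Measurable[M.sig T] G) : IndepFun F G ℙ := by
  rw [IndepFun_iff_Indep]
  have := indep_iSup_of_disjoint (fun i => (M.src_meas i).comap_le) M.src_indep h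
  exact indep_of_indep_of_le_left (indep_of_indep_of_le_right this
    (measurable_iff_comap_le.1 hG)) (measurable_iff_comap_le.1 hF)

theorem integral_indep {S T : Set (Idx N L K)} (h : Disjoint S T) {F G : Ω → ℂ}
    (hF : Measurable[M.sig S] F) (hG : Measurable[M.sig T] G) :
    ∫ ω, F ω * G ω = (∫ ω, F ω) * ∫ ω, G ω :=
  (M.sig_indep h hF hG).integral_fun_mul_eq_mul_integral
    (hF.mono (M.sig_le S) le_rfl).aestronglyMeasurable
    (hG.mono (M.sig_le T) le_rfl).aestronglyMeasurable

theorem memLp_indep {S T : Set (Idx N L K)} (h : Disjoint S T) {F G : Ω → ℂ}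
    (hF : Measurable[M.sig S] F) (hG : Measurable[M.sig T] G)
    (iF : MemLp F 2 ℙ) (iG : MemLp G 2 ℙ) : MemLp (fun ω => F ω * G ω) 2 ℙ := by
  have mF := hF.mono (M.sig_le S) le_rfl
  have mG := hG.mono (M.sig_le T) le_rfl
  rw [memLp_two_iff_integrable_sq_norm (by fun_prop)]
  have hi := (M.sig_indep h hF hG).comp (φ := fun z => ‖z‖ ^ 2) (ψ := fun z => ‖z‖ ^ 2)
    (by fun_prop) (by fun_prop)
  have := hi.integrable_mul ((memLp_two_iff_integrable_sq_norm (by fun_prop)).1 iF)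
    ((memLp_two_iff_integrable_sq_norm (by fun_prop)).1 iG)
  refine this.congr (ae_of_all _ fun ω => ?_)
  simp [mul_pow]

/-- index sets -/
def SH (n : Fin N) : Set (Idx N L K) := {i | ∃ l k b, i = Sum.inl (l, k, n, b)}
def SH1 (l : Fin L) (k : Fin K) (n : Fin N) : Set (Idx N L K) := {i | ∃ b, i = Sum.inl (l, k, n, b)}
def SP (n : Fin N) (u : Set ℕ) : Set (Idx N L K) := {i | ∃ s ∈ u, i = Sum.inr (Sum.inl (n, s))}
def SZ (n : Fin N) (s : ℕ) : Set (Idx N L K) :=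
  {i | ∃ b, i = Sum.inr (Sum.inr (Sum.inl (n, s, b)))}
def SE (n : Fin N) (s : ℕ) : Set (Idx N L K) :=
  {i | ∃ b, i = Sum.inr (Sum.inr (Sum.inr (n, s, b)))}
def ant : Idx N L K → Fin N
  | Sum.inl (_, _, n, _) => n
  | Sum.inr (Sum.inl (n, _)) => n
  | Sum.inr (Sum.inr (Sum.inl (n, _, _))) => n
  | Sum.inr (Sum.inr (Sum.inr (n, _, _))) => n
def SA (n : Fin N) : Set (Idx N L K) := {i | ant i = n}

theorem mk_meas {m : MeasurableSpace Ω} {a b : Ω → ℝ} (ha : Measurable[m] a)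
    (hb : Measurable[m] b) : Measurable[m] (fun ω => Complex.mk (a ω) (b ω)) := by
  have e : (fun ω => Complex.mk (a ω) (b ω)) = fun ω => (a ω : ℂ) + (b ω : ℂ) * I := by
    funext ω
    exact Complex.mk_eq_add_mul_I _ _
  rw [e]
  exact (Complex.measurable_ofReal.comp ha).add ((Complex.measurable_ofReal.comp hb).mul_const I)

theorem ch_sig1 (l k n) : Measurable[M.sig (SH1 l k n)] (M.ch l k n) :=
  mk_meas (M.src_sig (i := Sum.inl (l, k, n, false)) ⟨false, rfl⟩)
    (M.src_sig (i := Sum.inl (l, k, n, true)) ⟨true, rfl⟩)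

theorem ch_sig (l k n) : Measurable[M.sig (SH n)] (M.ch l k n) :=
  (M.ch_sig1 l k n).mono (M.sig_mono (by rintro _ ⟨b, rfl⟩; exact ⟨l, k, b, rfl⟩)) le_rfl

theorem z_sig (n s) : Measurable[M.sig (SZ n s)] (M.z n s) :=
  mk_meas (M.src_sig (i := Sum.inr (Sum.inr (Sum.inl (n, s, false)))) ⟨false, rfl⟩)
    (M.src_sig (i := Sum.inr (Sum.inr (Sum.inl (n, s, true)))) ⟨true, rfl⟩)

theorem eta_sig (n s) : Measurable[M.sig (SE n s)] (M.eta n s) :=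
  mk_meas (M.src_sig (i := Sum.inr (Sum.inr (Sum.inr (n, s, false)))) ⟨false, rfl⟩)
    (M.src_sig (i := Sum.inr (Sum.inr (Sum.inr (n, s, true)))) ⟨true, rfl⟩)

/-- phase increments between s and r -/
noncomputable def ph (n : Fin N) (u : Finset ℕ) (ω : Ω) : ℂ :=
  Complex.exp (Complex.I * ((∑ s ∈ u, M.dphi n s ω : ℝ) : ℂ))

theorem ph_sig (n : Fin N) (u : Finset ℕ) : Measurable[M.sig (SP n u)] (M.ph n u) := by
  unfold ph
  refine Complex.measurable_exp.comp (Measurable.const_mul (Complex.measurable_ofReal.comp ?_) _)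
  exact Finset.measurable_fun_sum u fun s hs => M.src_sig (i := Sum.inr (Sum.inl (n, s))) ⟨s, hs, rfl⟩

theorem ph_norm (n : Fin N) (u : Finset ℕ) (ω : Ω) : ‖M.ph n u ω‖ = 1 := by
  unfold ph
  rw [mul_comm, Complex.norm_exp_ofReal_mul_I]

theorem ph_int [IsProbabilityMeasure (ℙ : Measure Ω)] (hδ : 0 ≤ δ) (n : Fin N) (u : Finset ℕ) :
    ∫ ω, M.ph n u ω = (Real.exp (-(δ / 2) * u.card) : ℂ) := by
  induction u using Finset.induction_on with
  | empty => simp [ph]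
  | insert s u hs ih =>
    have e : ∀ ω, M.ph n (insert s u) ω = M.ph n {s} ω * M.ph n u ω := by
      intro ω
      simp only [ph]
      rw [Finset.sum_insert hs, ← Complex.exp_add]
      simp [mul_add]
    simp_rw [e]
    rw [M.integral_indep _ (M.ph_sig n {s}) (M.ph_sig n u), ih]
    · have h1 : ∫ ω, M.ph n {s} ω = cexp (-(δ / 2)) := by
        have h := charFun_gaussianReal (μ := 0) (v := Real.toNNReal δ) 1
        rw [← M.law_dphi n s, charFun_apply,
          integral_map (M.meas_dphi n s).aemeasurable (by fun_prop)] at h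
        simp only [ph, Finset.sum_singleton]
        convert h using 2
        · funext ω
          simp [mul_comm]
        · simp [Real.coe_toNNReal _ hδ]
      rw [h1, Finset.card_insert_of_notMem hs]
      push_cast
      rw [← Complex.exp_add]
      ring_nf
    · rw [Set.disjoint_left]
      rintro _ ⟨r, hr, rfl⟩ ⟨q, hq, h⟩
      simp at hr h hq
      subst h
      subst hr
      exact hs hq

/-- covariance functional -/
noncomputable def cv (f g : Ω → ℂ) : ℂ := ∫ ω, f ω * star (g ω)

theorem cv_integrable {f g : Ω → ℂ} (hf : MemLp f 2 ℙ) (hg : MemLp g 2 ℙ) :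
    Integrable (fun ω => f ω * star (g ω)) ℙ :=
  hf.integrable_mul hg.star

theorem cv_star (f g : Ω → ℂ) : cv g f = star (cv f g) := by
  unfold cv
  have := integral_conj (μ := (ℙ : Measure Ω)) (f := fun ω => f ω * star (g ω))
  rw [starRingEnd_apply] at this
  rw [← this]
  congr 1
  funext ω
  simp [mul_comm]

theorem cv_add_left {f f' g : Ω → ℂ} (hf : MemLp f 2 ℙ) (hf' : MemLp f' 2 ℙ) (hg : MemLp g 2 ℙ) :
    cv (fun ω => f ω + f' ω) g = cv f g + cv f' g := by
  unfold cv
  simp_rw [add_mul]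
  exact integral_add (cv_integrable hf hg) (cv_integrable hf' hg)

theorem cv_sub_left {f f' g : Ω → ℂ} (hf : MemLp f 2 ℙ) (hf' : MemLp f' 2 ℙ) (hg : MemLp g 2 ℙ) :
    cv (fun ω => f ω - f' ω) g = cv f g - cv f' g := by
  unfold cv
  simp_rw [sub_mul]
  exact integral_sub (cv_integrable hf hg) (cv_integrable hf' hg)

theorem cv_add_right {f f' g : Ω → ℂ} (hf : MemLp f 2 ℙ) (hf' : MemLp f' 2 ℙ) (hg : MemLp g 2 ℙ) :
    cv g (fun ω => f ω + f' ω) = cv g f + cv g f' := by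
  rw [cv_star, cv_add_left hf hf' hg, star_add, ← cv_star, ← cv_star]

theorem cv_sub_right {f f' g : Ω → ℂ} (hf : MemLp f 2 ℙ) (hf' : MemLp f' 2 ℙ) (hg : MemLp g 2 ℙ) :
    cv g (fun ω => f ω - f' ω) = cv g f - cv g f' := by
  rw [cv_star, cv_sub_left hf hf' hg, star_sub, ← cv_star, ← cv_star]

theorem cv_sum_left {ι : Type*} [Fintype ι] {f : ι → Ω → ℂ} {g : Ω → ℂ} (a : ι → ℂ)
    (hf : ∀ i, MemLp (f i) 2 ℙ) (hg : MemLp g 2 ℙ) :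
    cv (fun ω => ∑ i, f i ω * a i) g = ∑ i, a i * cv (f i) g := by
  unfold cv
  simp_rw [Finset.sum_mul]
  rw [integral_finsetSum]
  · refine Finset.sum_congr rfl fun i _ => ?_
    rw [← integral_const_mul]
    congr 1
    funext ω
    ring
  · intro i _
    have := (cv_integrable (hf i) hg).const_mul (a i)
    refine this.congr (ae_of_all _ fun ω => ?_)
    simp only
    ring

theorem cv_sum_right {ι : Type*} [Fintype ι] {f : ι → Ω → ℂ} {g : Ω → ℂ} (a : ι → ℂ)
    (hf : ∀ i, MemLp (f i) 2 ℙ) (hg : MemLp g 2 ℙ) :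
    cv g (fun ω => ∑ i, f i ω * a i) = ∑ i, star (a i) * cv g (f i) := by
  rw [cv_star, cv_sum_left a hf hg, star_sum]
  refine Finset.sum_congr rfl fun i _ => ?_
  rw [star_mul', ← cv_star]

theorem memLp_sum {ι : Type*} [Fintype ι] {f : ι → Ω → ℂ} (a : ι → ℂ)
    (hf : ∀ i, MemLp (f i) 2 ℙ) : MemLp (fun ω => ∑ i, f i ω * a i) 2 ℙ := by
  refine memLp_finsetSum _ fun i _ => ?_
  simpa [mul_comm] using (hf i).const_mul (a i)

theorem star_meas {m : MeasurableSpace Ω} {f : Ω → ℂ} (hf : Measurable[m] f) :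
    Measurable[m] (fun ω => star (f ω)) :=
  (continuous_star (R := ℂ)).measurable.comp hf

theorem cv_zero {S T : Set (Idx N L K)} (h : Disjoint S T) {F A W : Ω → ℂ}
    (hF : Measurable[M.sig S] F) (hA : Measurable[M.sig S] A) (hW : Measurable[M.sig T] W)
    (h0 : ∫ ω, W ω = 0) : cv F (fun ω => A ω * W ω) = 0 := by
  have e : ∀ ω, F ω * star (A ω * W ω) = (F ω * star (A ω)) * star (W ω) := by
    intro ω
    rw [star_mul']
    ring
  unfold cv
  simp_rw [e]
  rw [M.integral_indep h (F := fun ω => F ω * star (A ω)) (G := fun ω => star (W ω))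
    (hF.mul (star_meas hA)) (star_meas hW)]
  have := integral_conj (μ := (ℙ : Measure Ω)) (f := W)
  simp only [starRingEnd_apply] at this
  rw [this, h0]
  simp

theorem cv_zero' {S T : Set (Idx N L K)} (h : Disjoint S T) {F W : Ω → ℂ}
    (hF : Measurable[M.sig S] F) (hW : Measurable[M.sig T] W)
    (h0 : ∫ ω, W ω = 0) : cv F W = 0 := by
  have := M.cv_zero h hF (A := fun _ => 1) measurable_const hW h0
  simpa using this

section prob
variable [IsProbabilityMeasure (ℙ : Measure Ω)]

theorem ph_cov (hδ : 0 ≤ δ) (n : Fin N) (s r : ℕ) :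
    cv (M.ph n (Finset.Icc 1 s)) (M.ph n (Finset.Icc 1 r))
      = (Real.exp (-(δ / 2) * |(s : ℝ) - r|) : ℂ) := by
  have key : ∀ s r : ℕ, r ≤ s → cv (M.ph n (Finset.Icc 1 s)) (M.ph n (Finset.Icc 1 r))
      = (Real.exp (-(δ / 2) * |(s : ℝ) - r|) : ℂ) := by
    intro s r hrs
    have e : ∀ ω, M.ph n (Finset.Icc 1 s) ω * star (M.ph n (Finset.Icc 1 r) ω)
        = M.ph n (Finset.Ioc r s) ω := by
      intro ω
      have hd : Disjoint (Finset.Icc 1 r) (Finset.Ioc r s) := by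
        rw [Finset.disjoint_left]
        intro a
        simp only [Finset.mem_Icc, Finset.mem_Ioc]
        omega
      have hu : Finset.Icc 1 s = Finset.Icc 1 r ∪ Finset.Ioc r s := by
        ext a
        simp only [Finset.mem_Icc, Finset.mem_Ioc, Finset.mem_union]
        omega
      have h1 : M.ph n (Finset.Icc 1 s) ω
          = M.ph n (Finset.Icc 1 r) ω * M.ph n (Finset.Ioc r s) ω := by
        simp only [ph]
        rw [hu, Finset.sum_union hd, ← Complex.exp_add]
        simp [mul_add]
      have h2 : M.ph n (Finset.Icc 1 r) ω * star (M.ph n (Finset.Icc 1 r) ω) = 1 := by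
        rw [← starRingEnd_apply, Complex.mul_conj, Complex.normSq_eq_norm_sq, M.ph_norm]
        simp
      rw [h1]
      calc _ = (M.ph n (Finset.Icc 1 r) ω * star (M.ph n (Finset.Icc 1 r) ω))
            * M.ph n (Finset.Ioc r s) ω := by ring
        _ = _ := by rw [h2, one_mul]
    unfold cv
    simp_rw [e]
    rw [M.ph_int hδ, Nat.card_Ioc, abs_of_nonneg (by simpa using hrs), Nat.cast_sub hrs]
  rcases le_total r s with h | h
  · exact key s r h
  · rw [cv_star, key r s h, abs_sub_comm]
    simp [← starRingEnd_apply, -Complex.ofReal_exp]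

variable (hlam : ∀ l k, 0 < lam l k)

noncomputable def gf (n : Fin N) (a : Fin L → Fin K → ℂ) (ω : Ω) : ℂ :=
  ∑ l, ∑ m, M.ch l m n ω * a l m

noncomputable def Pf (n : Fin N) (s : ℕ) (a : Fin L → Fin K → ℂ) (ω : Ω) : ℂ :=
  M.ph n (Finset.Icc 1 s) ω * M.gf n a ω

noncomputable def rf (n : Fin N) (b : Fin B) (ω : Ω) : ℂ :=
  (κ : ℂ) * ((Real.sqrt (∑ l, ∑ m, Complex.normSq (x l m b)
        * Complex.normSq (M.ch l m n ω)) : ℝ) : ℂ)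

noncomputable def Qf (n : Fin N) (b : Fin B) (ω : Ω) : ℂ := M.rf n b ω * M.z n ((b : ℕ) + 1) ω

theorem y_eq (n : Fin N) (b : Fin B) : M.y n b = fun ω =>
    (M.Pf n ((b : ℕ) + 1) (fun l m => x l m b) ω + M.Qf n b ω) + M.eta n ((b : ℕ) + 1) ω := rfl

theorem hEff_eq (l : Fin L) (k : Fin K) (t : ℕ) (n : Fin N) :
    M.hEff l k t n = M.Pf n t (fun l' k' => if l' = l then (if k' = k then 1 else 0) else 0) := by
  funext ω
  simp only [hEff, Pf, gf, ph, phase]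
  congr 1
  rw [Finset.sum_eq_single l, Finset.sum_eq_single k] <;> simp +contextual

include hlam in
theorem ch_cg (l : Fin L) (m : Fin K) (n : Fin N) : MemLp (M.ch l m n) 2 ℙ ∧ (∫ ω, M.ch l m n ω) = 0 ∧
    cv (M.ch l m n) (M.ch l m n) = (lam l m : ℂ) :=
  cgauss (M.meas_hRe l m n) (M.meas_hIm l m n) (hlam l m).le (M.law_hRe l m n) (M.law_hIm l m n)

theorem z_cg (n : Fin N) (s : ℕ) : MemLp (M.z n s) 2 ℙ ∧ (∫ ω, M.z n s ω) = 0 ∧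
    cv (M.z n s) (M.z n s) = 1 := by
  have := cgauss (M.meas_zRe n s) (M.meas_zIm n s) zero_le_one (M.law_zRe n s) (M.law_zIm n s)
  rw [Complex.ofReal_one] at this
  exact this

theorem eta_cg (h : 0 ≤ σ2 * ξ) (n : Fin N) (s : ℕ) : MemLp (M.eta n s) 2 ℙ ∧ (∫ ω, M.eta n s ω) = 0 ∧
    cv (M.eta n s) (M.eta n s) = ((σ2 * ξ : ℝ) : ℂ) :=
  cgauss (M.meas_etaRe n s) (M.meas_etaIm n s) h (M.law_etaRe n s) (M.law_etaIm n s)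

include hlam in
theorem ch_cov (l l' : Fin L) (m m' : Fin K) (n : Fin N) :
    cv (M.ch l m n) (M.ch l' m' n) = if l = l' ∧ m = m' then (lam l m : ℂ) else 0 := by
  split_ifs with h
  · obtain ⟨rfl, rfl⟩ := h
    exact (M.ch_cg hlam l m n).2.2
  · refine M.cv_zero' ?_ (M.ch_sig1 l m n) (M.ch_sig1 l' m' n) (M.ch_cg hlam l' m' n).2.1
    rw [Set.disjoint_left]
    rintro _ ⟨b, rfl⟩ ⟨b', h'⟩
    simp at h'
    exact h ⟨h'.1, h'.2.1⟩

theorem gf_eq (n : Fin N) (a : Fin L → Fin K → ℂ) :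
    M.gf n a = fun ω => ∑ p : Fin L × Fin K, M.ch p.1 p.2 n ω * a p.1 p.2 := by
  funext ω
  simp only [gf]
  rw [Fintype.sum_prod_type]

include hlam in
theorem gf_memLp (n : Fin N) (a : Fin L → Fin K → ℂ) : MemLp (M.gf n a) 2 ℙ := by
  rw [gf_eq]
  exact memLp_sum (f := fun p : Fin L × Fin K => M.ch p.1 p.2 n) (fun p => a p.1 p.2)
    fun p => (M.ch_cg hlam p.1 p.2 n).1

include hlam in
theorem gf_cov (n : Fin N) (a a' : Fin L → Fin K → ℂ) :
    cv (M.gf n a) (M.gf n a') = ∑ l, ∑ m, (lam l m : ℂ) * (a l m * star (a' l m)) := by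
  have hf := fun p : Fin L × Fin K => (M.ch_cg hlam p.1 p.2 n).1
  have hg := M.gf_memLp hlam n a'
  rw [gf_eq M n a, cv_sum_left (f := fun p : Fin L × Fin K => M.ch p.1 p.2 n) (fun p => a p.1 p.2) hf hg,
    ← Fintype.sum_prod_type (f := fun p : Fin L × Fin K => (lam p.1 p.2 : ℂ) * (a p.1 p.2 * star (a' p.1 p.2)))]
  refine Finset.sum_congr rfl fun p _ => ?_
  rw [gf_eq M n a', cv_sum_right (f := fun p : Fin L × Fin K => M.ch p.1 p.2 n) (fun p => a' p.1 p.2) hf (hf p),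
    Finset.sum_eq_single p]
  · rw [M.ch_cov hlam]
    simp
    ring
  · intro q _ hq
    rw [M.ch_cov hlam, if_neg, mul_zero]
    rintro ⟨h1, h2⟩
    exact hq (Prod.ext h1.symm h2.symm)
  · simp

include hlam in
theorem gf_mean (n : Fin N) (a : Fin L → Fin K → ℂ) : ∫ ω, M.gf n a ω = 0 := by
  rw [gf_eq, integral_finsetSum]
  · refine Finset.sum_eq_zero fun p _ => ?_
    rw [integral_mul_const, (M.ch_cg hlam p.1 p.2 n).2.1, zero_mul]
  · intro p _
    exact ((M.ch_cg hlam p.1 p.2 n).1.integrable (by norm_num)).mul_const _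

theorem gf_sig (n : Fin N) (a : Fin L → Fin K → ℂ) : Measurable[M.sig (SH n)] (M.gf n a) :=
  Finset.measurable_fun_sum _ fun l _ => Finset.measurable_fun_sum _ fun m _ =>
    (M.ch_sig l m n).mul_const _

theorem rf_sig (n : Fin N) (b : Fin B) : Measurable[M.sig (SH n)] (M.rf n b) := by
  unfold rf
  refine Measurable.const_mul (Complex.measurable_ofReal.comp (Measurable.sqrt ?_)) _
  exact Finset.measurable_fun_sum _ fun l _ => Finset.measurable_fun_sum _ fun m _ =>
    (Complex.continuous_normSq.measurable.comp (M.ch_sig l m n)).const_mul _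

theorem disj_P_H (n : Fin N) (u : Set ℕ) : Disjoint (SP n u : Set (Idx N L K)) (SH n) := by
  rw [Set.disjoint_left]
  rintro _ ⟨s, hs, rfl⟩ ⟨l, k, b, h⟩
  simp at h

include hlam in
theorem Pf_memLp (n : Fin N) (s : ℕ) (a : Fin L → Fin K → ℂ) : MemLp (M.Pf n s a) 2 ℙ := by
  have h := M.gf_memLp hlam n a
  refine h.congr_norm ?_ (ae_of_all _ fun ω => ?_)
  · exact (((M.ph_sig n _).mono (M.sig_le _) le_rfl).mul
      ((M.gf_sig n a).mono (M.sig_le _) le_rfl)).aestronglyMeasurable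
  · simp [Pf, M.ph_norm]

include hlam in
theorem Pf_cov (hδ : 0 ≤ δ) (n : Fin N) (s r : ℕ) (a a' : Fin L → Fin K → ℂ) :
    cv (M.Pf n s a) (M.Pf n r a') = (Real.exp (-(δ / 2) * |(s : ℝ) - r|) : ℂ)
      * ∑ l, ∑ m, (lam l m : ℂ) * (a l m * star (a' l m)) := by
  rw [← M.gf_cov hlam n, ← M.ph_cov hδ n]
  have e : ∀ ω, M.Pf n s a ω * star (M.Pf n r a' ω) =
      (M.ph n (Finset.Icc 1 s) ω * star (M.ph n (Finset.Icc 1 r) ω))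
        * (M.gf n a ω * star (M.gf n a' ω)) := by
    intro ω
    simp only [Pf]
    rw [star_mul']
    ring
  unfold cv
  simp_rw [e]
  have hm : ∀ s, Measurable[M.sig (SP n Set.univ)] (M.ph n (Finset.Icc 1 s)) := fun s =>
    (M.ph_sig n _).mono (M.sig_mono (by rintro _ ⟨q, _, rfl⟩; exact ⟨q, trivial, rfl⟩)) le_rfl
  exact M.integral_indep (disj_P_H n Set.univ) ((hm s).mul (star_meas (hm r)))
    ((M.gf_sig n a).mul (star_meas (M.gf_sig n a')))

include hlam in
theorem Pf_mean (n : Fin N) (s : ℕ) (a : Fin L → Fin K → ℂ) : ∫ ω, M.Pf n s a ω = 0 := by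
  unfold Pf
  rw [M.integral_indep (disj_P_H n _) (M.ph_sig n _) (M.gf_sig n a), M.gf_mean hlam, mul_zero]

theorem rf_sq (n : Fin N) (b : Fin B) (ω : Ω) : M.rf n b ω * star (M.rf n b ω) =
    (κ : ℂ) ^ 2 * ∑ p : Fin L × Fin K, (normSq (x p.1 p.2 b) : ℂ) *
      (M.ch p.1 p.2 n ω * star (M.ch p.1 p.2 n ω)) := by
  have h0 : 0 ≤ ∑ l, ∑ m, Complex.normSq (x l m b) * Complex.normSq (M.ch l m n ω) :=
    Finset.sum_nonneg fun l _ => Finset.sum_nonneg fun m _ =>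
      mul_nonneg (normSq_nonneg _) (normSq_nonneg _)
  have h1 : M.rf n b ω * star (M.rf n b ω) = (κ : ℂ) ^ 2 *
      ((Real.sqrt (∑ l, ∑ m, Complex.normSq (x l m b) * Complex.normSq (M.ch l m n ω)) ^ 2 : ℝ) : ℂ) := by
    simp only [rf, ← starRingEnd_apply, map_mul, Complex.conj_ofReal]
    push_cast
    ring
  rw [h1, Real.sq_sqrt h0, Fintype.sum_prod_type]
  push_cast
  simp only [← starRingEnd_apply, Complex.mul_conj]

include hlam in
theorem rf_memLp (n : Fin N) (b : Fin B) : MemLp (M.rf n b) 2 ℙ := by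
  rw [memLp_two_iff_integrable_sq_norm
    ((M.rf_sig n b).mono (M.sig_le _) le_rfl).aestronglyMeasurable]
  have hi : Integrable (fun ω => M.rf n b ω * star (M.rf n b ω)) ℙ := by
    simp_rw [M.rf_sq]
    refine Integrable.const_mul (integrable_finsetSum _ fun p _ => Integrable.const_mul ?_ _) _
    exact cv_integrable (M.ch_cg hlam _ _ n).1 (M.ch_cg hlam _ _ n).1
  refine hi.norm.congr (ae_of_all _ fun ω => ?_)
  simp [sq]

include hlam in
theorem rf_cov (n : Fin N) (b : Fin B) : cv (M.rf n b) (M.rf n b) =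
    (κ : ℂ) ^ 2 * ∑ l, ∑ m, (lam l m : ℂ) * (normSq (x l m b) : ℂ) := by
  unfold cv
  simp_rw [M.rf_sq]
  rw [integral_const_mul, integral_finsetSum, Fintype.sum_prod_type]
  · congr 1
    refine Finset.sum_congr rfl fun l _ => Finset.sum_congr rfl fun m _ => ?_
    rw [integral_const_mul, mul_comm]
    congr 1
    exact (M.ch_cg hlam l m n).2.2
  · intro p _
    exact (cv_integrable (M.ch_cg hlam _ _ n).1 (M.ch_cg hlam _ _ n).1).const_mul _

theorem disj_H_Z (n : Fin N) (s : ℕ) : Disjoint (SH n : Set (Idx N L K)) (SZ n s) := by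
  rw [Set.disjoint_left]
  rintro _ ⟨l, k, b, rfl⟩ ⟨b, h⟩
  simp at h

include hlam in
theorem Qf_memLp (n : Fin N) (b : Fin B) : MemLp (M.Qf n b) 2 ℙ :=
  M.memLp_indep (disj_H_Z n _) (M.rf_sig n b) (M.z_sig n _) (M.rf_memLp hlam n b) (M.z_cg n _).1

theorem Qf_mean (n : Fin N) (b : Fin B) : ∫ ω, M.Qf n b ω = 0 := by
  unfold Qf
  rw [M.integral_indep (disj_H_Z n _) (M.rf_sig n b) (M.z_sig n _), (M.z_cg n _).2.1, mul_zero]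

theorem memLp_fun_add {f g : Ω → ℂ} (hf : MemLp f 2 ℙ) (hg : MemLp g 2 ℙ) :
    MemLp (fun ω => f ω + g ω) 2 ℙ := hf.add hg

/-- distorted signal without receiver noise -/
noncomputable def Wf (n : Fin N) (b : Fin B) (ω : Ω) : ℂ :=
  M.Pf n ((b : ℕ) + 1) (fun l m => x l m b) ω + M.Qf n b ω

/-- all sources except receiver noise and some distortion index -/
def SX (n : Fin N) (s : ℕ) : Set (Idx N L K) := SA n \ SZ n s
def SY (n : Fin N) : Set (Idx N L K) := {i | i ∈ SA n ∧ ∀ s, i ∉ SE n s}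

theorem SH_sub_SX (n : Fin N) (s : ℕ) : (SH n : Set (Idx N L K)) ⊆ SX n s := by
  rintro _ ⟨l, k, b, rfl⟩
  refine ⟨rfl, ?_⟩
  rintro ⟨b, h⟩
  simp at h

theorem SP_sub_SX (n : Fin N) (s : ℕ) (u : Set ℕ) : (SP n u : Set (Idx N L K)) ⊆ SX n s := by
  rintro _ ⟨l, _, rfl⟩
  refine ⟨rfl, ?_⟩
  rintro ⟨b, h⟩
  simp at h

theorem SZ_sub_SX (n : Fin N) {s r : ℕ} (hsr : r ≠ s) : (SZ n r : Set (Idx N L K)) ⊆ SX n s := by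
  rintro _ ⟨b, rfl⟩
  refine ⟨rfl, ?_⟩
  rintro ⟨b, h⟩
  simp at h
  exact hsr h.1

theorem SH_sub_SY (n : Fin N) : (SH n : Set (Idx N L K)) ⊆ SY n := by
  rintro _ ⟨l, k, b, rfl⟩
  refine ⟨rfl, ?_⟩
  rintro s ⟨b, h⟩
  simp at h

theorem SP_sub_SY (n : Fin N) (u : Set ℕ) : (SP n u : Set (Idx N L K)) ⊆ SY n := by
  rintro _ ⟨l, _, rfl⟩
  refine ⟨rfl, ?_⟩
  rintro s ⟨b, h⟩
  simp at h

theorem SZ_sub_SY (n : Fin N) (r : ℕ) : (SZ n r : Set (Idx N L K)) ⊆ SY n := by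
  rintro _ ⟨b, rfl⟩
  refine ⟨rfl, ?_⟩
  rintro s ⟨b, h⟩
  simp at h

theorem SE_sub_SA (n : Fin N) (r : ℕ) : (SE n r : Set (Idx N L K)) ⊆ SA n := by
  rintro _ ⟨b, rfl⟩
  rfl

theorem SY_sub_SA (n : Fin N) : (SY n : Set (Idx N L K)) ⊆ SA n := fun _ h => h.1

theorem Pf_sigX (n : Fin N) (q s : ℕ) (a : Fin L → Fin K → ℂ) :
    Measurable[M.sig (SX n q)] (M.Pf n s a) :=
  ((M.ph_sig n _).mono (M.sig_mono (SP_sub_SX n q _)) le_rfl).mul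
    ((M.gf_sig n a).mono (M.sig_mono (SH_sub_SX n q)) le_rfl)

theorem Pf_sigY (n : Fin N) (s : ℕ) (a : Fin L → Fin K → ℂ) :
    Measurable[M.sig (SY n)] (M.Pf n s a) :=
  ((M.ph_sig n _).mono (M.sig_mono (SP_sub_SY n _)) le_rfl).mul
    ((M.gf_sig n a).mono (M.sig_mono (SH_sub_SY n)) le_rfl)

theorem Qf_sigX (n : Fin N) (q : ℕ) (b : Fin B) (h : (b : ℕ) + 1 ≠ q) :
    Measurable[M.sig (SX n q)] (M.Qf n b) :=
  ((M.rf_sig n b).mono (M.sig_mono (SH_sub_SX n q)) le_rfl).mul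
    ((M.z_sig n _).mono (M.sig_mono (SZ_sub_SX n h)) le_rfl)

theorem Qf_sigY (n : Fin N) (b : Fin B) : Measurable[M.sig (SY n)] (M.Qf n b) :=
  ((M.rf_sig n b).mono (M.sig_mono (SH_sub_SY n)) le_rfl).mul
    ((M.z_sig n _).mono (M.sig_mono (SZ_sub_SY n _)) le_rfl)

theorem Wf_sigY (n : Fin N) (b : Fin B) : Measurable[M.sig (SY n)] (M.Wf n b) :=
  (M.Pf_sigY n _ _).add (M.Qf_sigY n b)

theorem y_sigA (n : Fin N) (b : Fin B) : Measurable[M.sig (SA n)] (M.y n b) :=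
  ((M.Wf_sigY n b).mono (M.sig_mono (SY_sub_SA n)) le_rfl).add
    ((M.eta_sig n _).mono (M.sig_mono (SE_sub_SA n _)) le_rfl)

theorem cv_F_Qf {F : Ω → ℂ} (n : Fin N) (b : Fin B)
    (hF : Measurable[M.sig (SX n ((b : ℕ) + 1))] F) : cv F (M.Qf n b) = 0 :=
  M.cv_zero (Set.disjoint_sdiff_left (s := SZ n ((b : ℕ) + 1)) (t := SA n)) hF
    ((M.rf_sig n b).mono (M.sig_mono (SH_sub_SX n _)) le_rfl) (M.z_sig n _) (M.z_cg n _).2.1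

include hlam in
theorem Qf_cov (n : Fin N) (b b' : Fin B) : cv (M.Qf n b) (M.Qf n b') =
    if b = b' then (κ : ℂ) ^ 2 * ∑ l, ∑ m, (lam l m : ℂ) * (normSq (x l m b) : ℂ) else 0 := by
  split_ifs with h
  · subst h
    rw [← M.rf_cov hlam n b]
    have e : ∀ ω, M.Qf n b ω * star (M.Qf n b ω) = (M.rf n b ω * star (M.rf n b ω)) *
        (M.z n ((b : ℕ) + 1) ω * star (M.z n ((b : ℕ) + 1) ω)) := by
      intro ω
      simp only [Qf]
      rw [star_mul']
      ring
    have hz := (M.z_cg n ((b : ℕ) + 1)).2.2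
    unfold cv at hz ⊢
    simp_rw [e]
    rw [M.integral_indep (F := fun ω => M.rf n b ω * star (M.rf n b ω))
      (G := fun ω => M.z n ((b : ℕ) + 1) ω * star (M.z n ((b : ℕ) + 1) ω)) (disj_H_Z n _) ((M.rf_sig n b).mul (star_meas (M.rf_sig n b)))
      ((M.z_sig n _).mul (star_meas (M.z_sig n _))), hz, mul_one]
  · refine M.cv_F_Qf n b' (M.Qf_sigX n _ b ?_)
    intro h'
    exact h (Fin.ext (by omega))

include hlam in
theorem Wf_memLp (n : Fin N) (b : Fin B) : MemLp (M.Wf n b) 2 ℙ :=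
  (M.Pf_memLp hlam n _ _).add (M.Qf_memLp hlam n b)

include hlam in
theorem Wf_cov (hδ : 0 ≤ δ) (n : Fin N) (b b' : Fin B) : cv (M.Wf n b) (M.Wf n b') =
    (PsiMat lam σ2 ξ κ δ x - ((σ2 * ξ : ℝ) : ℂ) • 1) b b' := by
  have p := fun b : Fin B => M.Pf_memLp hlam n ((b : ℕ) + 1) (fun l m => x l m b)
  have q := M.Qf_memLp hlam n
  unfold Wf
  rw [cv_add_left (p b) (q b) (memLp_fun_add (p b') (q b')), cv_add_right (p b') (q b') (p b),
    cv_add_right (p b') (q b') (q b), M.Pf_cov hlam hδ, M.Qf_cov hlam,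
    M.cv_F_Qf n b' (M.Pf_sigX n _ _ _), cv_star _ (M.Qf n b), M.cv_F_Qf n b (M.Pf_sigX n _ _ _)]
  simp only [PsiMat, add_sub_cancel_right, Matrix.sum_apply, Matrix.smul_apply, Xmat,
    Matrix.of_apply, smul_eq_mul, star_zero, add_zero, zero_add]
  split_ifs with h
  · subst h
    simp only [sub_self, abs_zero, mul_zero, Real.exp_zero, Complex.ofReal_one, one_mul,
      Finset.mul_sum, ← Finset.sum_add_distrib]
    refine Finset.sum_congr rfl fun l _ => Finset.sum_congr rfl fun m _ => ?_
    rw [← starRingEnd_apply, Complex.mul_conj]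
    push_cast
    ring
  · rw [add_zero, Finset.mul_sum]
    simp only [Finset.mul_sum]
    refine Finset.sum_congr rfl fun l _ => Finset.sum_congr rfl fun m _ => ?_
    have : (((b : ℕ) + 1 : ℕ) : ℝ) - (((b' : ℕ) + 1 : ℕ) : ℝ) = ((b : ℕ) : ℝ) - ((b' : ℕ) : ℝ) := by
      push_cast
      ring
    rw [this]
    ring

theorem disj_Y_E (n : Fin N) (s : ℕ) : Disjoint (SY n : Set (Idx N L K)) (SE n s) := by
  rw [Set.disjoint_left]
  intro i h h'
  exact h.2 s h'

theorem eta_cov (h0 : 0 ≤ σ2 * ξ) (n : Fin N) (s r : ℕ) : cv (M.eta n s) (M.eta n r) =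
    if s = r then ((σ2 * ξ : ℝ) : ℂ) else 0 := by
  split_ifs with h
  · subst h
    exact (M.eta_cg h0 n s).2.2
  · refine M.cv_zero' ?_ (M.eta_sig n s) (M.eta_sig n r) (M.eta_cg h0 n r).2.1
    rw [Set.disjoint_left]
    rintro _ ⟨b, rfl⟩ ⟨b', h'⟩
    simp at h'
    exact h h'.1

variable (h0 : 0 < σ2 * ξ)

include hlam h0 in
theorem y_memLp (n : Fin N) (b : Fin B) : MemLp (M.y n b) 2 ℙ :=
  (M.Wf_memLp hlam n b).add (M.eta_cg h0.le n _).1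

include hlam h0 in
theorem y_cov (hδ : 0 ≤ δ) (n : Fin N) (b b' : Fin B) : cv (M.y n b) (M.y n b') =
    PsiMat lam σ2 ξ κ δ x b b' := by
  have w := M.Wf_memLp hlam n
  have e := fun s => (M.eta_cg h0.le n s).1
  have z : ∀ (b : Fin B) s, cv (M.Wf n b) (M.eta n s) = 0 := fun b s =>
    M.cv_zero' (disj_Y_E n s) (M.Wf_sigY n b) (M.eta_sig n s) (M.eta_cg h0.le n s).2.1
  change cv (fun ω => M.Wf n b ω + M.eta n ((b : ℕ) + 1) ω)
    (fun ω => M.Wf n b' ω + M.eta n ((b' : ℕ) + 1) ω) = _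
  rw [cv_add_left (w b) (e _) (memLp_fun_add (w b') (e _)), cv_add_right (w b') (e _) (w b),
    cv_add_right (w b') (e _) (e _), M.Wf_cov hlam hδ, M.eta_cov h0.le, z,
    cv_star _ (M.eta n _), z]
  simp only [Matrix.sub_apply, Matrix.smul_apply, smul_eq_mul, Matrix.one_apply, star_zero,
    add_left_inj, Fin.val_inj]
  split_ifs <;> simp

include hlam h0 in
theorem y_mean (n : Fin N) (b : Fin B) : ∫ ω, M.y n b ω = 0 := by
  have p := (M.Pf_memLp hlam n ((b : ℕ) + 1) (fun l m => x l m b)).integrable (by norm_num)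
  have q := (M.Qf_memLp hlam n b).integrable (by norm_num)
  have r := (M.eta_cg h0.le n ((b : ℕ) + 1)).1.integrable (by norm_num)
  have pq : Integrable (fun ω => M.Pf n ((b : ℕ) + 1) (fun l m => x l m b) ω + M.Qf n b ω) ℙ :=
    p.add q
  rw [y_eq]
  rw [integral_add pq r, integral_add p q, M.Pf_mean hlam, M.Qf_mean,
    (M.eta_cg h0.le n _).2.1]
  simp

theorem cv_self_nonneg (f : Ω → ℂ) : 0 ≤ (cv f f).re := by
  have : cv f f = ((∫ ω, normSq (f ω) : ℝ) : ℂ) := by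
    rw [cv, ← integral_complex_ofReal]
    congr 1
    funext ω
    rw [← starRingEnd_apply, Complex.mul_conj]
  rw [this, Complex.ofReal_re]
  exact integral_nonneg fun ω => normSq_nonneg _

include M hlam h0 in
theorem Psi_unit (hδ : 0 ≤ δ) (n : Fin N) : IsUnit (PsiMat lam σ2 ξ κ δ x) := by
  rw [← Matrix.vecMul_injective_iff_isUnit]
  rw [← Matrix.coe_vecMulLinear, ← LinearMap.ker_eq_bot, LinearMap.ker_eq_bot']
  intro c hc
  rw [Matrix.vecMulLinear_apply] at hc
  have w := M.Wf_memLp hlam n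
  have h1 := cv_sum_left (f := M.Wf n) c w (memLp_sum c w)
  simp_rw [cv_sum_right c w (w _), M.Wf_cov hlam hδ n] at h1
  have h2 : ∑ i, c i * ∑ j, star (c j) * (PsiMat lam σ2 ξ κ δ x - ((σ2 * ξ : ℝ) : ℂ) • 1) i j
      = (c ᵥ* PsiMat lam σ2 ξ κ δ x) ⬝ᵥ star c - ((σ2 * ξ * ∑ i, normSq (c i) : ℝ) : ℂ) := by
    simp only [Matrix.sub_apply, Matrix.smul_apply, smul_eq_mul, mul_sub, Finset.sum_sub_distrib]
    congr 1
    · simp only [dotProduct, vecMul, Finset.mul_sum, Finset.sum_mul]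
      rw [Finset.sum_comm]
      refine Finset.sum_congr rfl fun i _ => Finset.sum_congr rfl fun j _ => ?_
      simp only [Pi.star_apply]
      ring
    · push_cast
      rw [Finset.mul_sum]
      refine Finset.sum_congr rfl fun i _ => ?_
      rw [Finset.sum_eq_single i]
      · rw [Matrix.one_apply_eq, ← Complex.mul_conj, starRingEnd_apply]
        ring
      · intro j _ hj
        rw [Matrix.one_apply_ne hj.symm]
        simp
      · simp
  rw [h2, hc, zero_dotProduct, zero_sub] at h1
  have h3 := cv_self_nonneg (fun ω => ∑ i, M.Wf n i ω * c i)
  rw [h1, ← Complex.ofReal_neg, Complex.ofReal_re] at h3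
  have h4 : 0 ≤ ∑ i, normSq (c i) := Finset.sum_nonneg fun i _ => normSq_nonneg _
  have h5 : ∑ i, normSq (c i) = 0 := by nlinarith
  rw [Finset.sum_eq_zero_iff_of_nonneg fun i _ => normSq_nonneg _] at h5
  funext i
  exact normSq_eq_zero.1 (h5 i (Finset.mem_univ i))

include hlam in
theorem hy_cov (hδ : 0 ≤ δ) (h0 : 0 < σ2 * ξ) (l : Fin L) (k : Fin K) (t : ℕ) (ht : B ≤ t) (n : Fin N) (b : Fin B) :
    cv (M.hEff l k t n) (M.y n b) = (lam l k : ℂ) * (star (x l k) ᵥ* Dmat δ t B) b := by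
  have e := fun s => (M.eta_cg h0.le n s).1
  have p := fun b : Fin B => M.Pf_memLp hlam n ((b : ℕ) + 1) (fun l m => x l m b)
  have q := M.Qf_memLp hlam n
  rw [y_eq, hEff_eq, cv_add_right (memLp_fun_add (p b) (q b)) (e _) (M.Pf_memLp hlam n _ _),
    cv_add_right (p b) (q b) (M.Pf_memLp hlam n _ _), M.cv_F_Qf n b (M.Pf_sigX n _ _ _),
    M.cv_zero' (disj_Y_E n _) (M.Pf_sigY n _ _) (M.eta_sig n _) (M.eta_cg h0.le n _).2.1,
    M.Pf_cov hlam hδ, Dmat, Matrix.vecMul_diagonal, Finset.sum_eq_single l, Finset.sum_eq_single k]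
  · have : (b : ℕ) + 1 ≤ t := by omega
    have h : (((b : ℕ) + 1 : ℕ) : ℝ) ≤ t := by exact_mod_cast this
    rw [abs_of_nonneg (by linarith)]
    push_cast
    simp only [if_true, Pi.star_apply]
    ring
  · simp +contextual
  · simp
  · simp +contextual
  · simp

include hlam in
theorem hh_cov (hδ : 0 ≤ δ) (l : Fin L) (k : Fin K) (t : ℕ) (n : Fin N) :
    cv (M.hEff l k t n) (M.hEff l k t n) = (lam l k : ℂ) := by
  rw [hEff_eq, M.Pf_cov hlam hδ, Finset.sum_eq_single l, Finset.sum_eq_single k]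
  · simp
  · simp +contextual
  · simp
  · simp +contextual
  · simp

/-- filter coefficients -/
noncomputable def cf (l : Fin L) (k : Fin K) (t : ℕ) (_ : MIMOModel Ω N B L K lam σ2 ξ κ δ x) : Fin B → ℂ :=
  Matrix.vecMul (star (x l k)) (Dmat δ t B * (PsiMat lam σ2 ξ κ δ x)⁻¹)

theorem hHat_eq (l : Fin L) (k : Fin K) (t : ℕ) (n : Fin N) :
    M.hHat l k t n = fun ω => ∑ b, M.y n b ω * ((lam l k : ℂ) * cf l k t M b) := by
  funext ω
  simp only [hHat, cf, Finset.mul_sum]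
  exact Finset.sum_congr rfl fun b _ => by ring

noncomputable def er (l : Fin L) (k : Fin K) (t : ℕ) (n : Fin N) (ω : Ω) : ℂ :=
  M.hEff l k t n ω - M.hHat l k t n ω

include hlam in
theorem hEff_memLp (l : Fin L) (k : Fin K) (t : ℕ) (n : Fin N) : MemLp (M.hEff l k t n) 2 ℙ := by
  rw [hEff_eq]
  exact M.Pf_memLp hlam n _ _

include hlam h0 in
theorem hHat_memLp (l : Fin L) (k : Fin K) (t : ℕ) (n : Fin N) : MemLp (M.hHat l k t n) 2 ℙ := by
  rw [hHat_eq]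
  exact memLp_sum _ (M.y_memLp hlam h0 n)

include hlam h0 in
theorem er_memLp (l : Fin L) (k : Fin K) (t : ℕ) (n : Fin N) : MemLp (M.er l k t n) 2 ℙ :=
  (M.hEff_memLp hlam l k t n).sub (M.hHat_memLp hlam h0 l k t n)

theorem er_sig (l : Fin L) (k : Fin K) (t : ℕ) (n : Fin N) :
    Measurable[M.sig (SA n)] (M.er l k t n) := by
  unfold er
  rw [hHat_eq, hEff_eq]
  exact ((M.Pf_sigY n _ _).mono (M.sig_mono (SY_sub_SA n)) le_rfl).sub
    (Finset.measurable_fun_sum _ fun b _ => (M.y_sigA n b).mul_const _)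

include hlam h0 in
theorem er_mean (l : Fin L) (k : Fin K) (t : ℕ) (n : Fin N) : ∫ ω, M.er l k t n ω = 0 := by
  have y1 := fun b => (M.y_memLp hlam h0 n b).integrable (q := 2) (by norm_num)
  unfold er
  rw [integral_sub ((M.hEff_memLp hlam l k t n).integrable (by norm_num))
    ((M.hHat_memLp hlam h0 l k t n).integrable (by norm_num)), hEff_eq, hHat_eq, M.Pf_mean hlam,
    integral_finsetSum _ fun b _ => (y1 b).mul_const _]
  simp only [integral_mul_const, M.y_mean hlam h0]
  simp

include hlam h0 in
theorem er_cov_ne (l : Fin L) (k : Fin K) (t : ℕ) {n n' : Fin N} (h : n ≠ n') :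
    cv (M.er l k t n) (M.er l k t n') = 0 := by
  refine M.cv_zero' ?_ (M.er_sig l k t n) (M.er_sig l k t n') (M.er_mean hlam h0 l k t n')
  rw [Set.disjoint_left]
  intro i h1 h2
  exact h (h1.symm.trans h2)

include hlam h0 in
theorem er_cov (hδ : 0 ≤ δ) (l : Fin L) (k : Fin K) (t : ℕ) (ht : B ≤ t) (n : Fin N) :
    cv (M.er l k t n) (M.er l k t n) = ((lam l k : ℝ) : ℂ) * (1 - ((lam l k : ℝ) : ℂ)
            * (star (x l k) ⬝ᵥ (Dmat δ t B * (PsiMat lam σ2 ξ κ δ x)⁻¹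
                * (Dmat δ t B)ᴴ).mulVec (x l k))) := by
  have hh := M.hEff_memLp hlam l k t n
  have hs := M.hHat_memLp hlam h0 l k t n
  have hy := M.y_memLp hlam h0 n
  have hc : cf l k t M ᵥ* PsiMat lam σ2 ξ κ δ x = star (x l k) ᵥ* Dmat δ t B := by
    rw [cf, Matrix.vecMul_vecMul, Matrix.mul_assoc, Matrix.nonsing_inv_mul, Matrix.mul_one]
    exact (Matrix.isUnit_iff_isUnit_det _).1 (M.Psi_unit hlam h0 hδ n)
  -- orthogonality: the error is uncorrelated with every observation
  have horth : ∀ b, cv (M.er l k t n) (M.y n b) = 0 := by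
    intro b
    unfold er
    rw [cv_sub_left hh hs (hy b), hHat_eq, cv_sum_left _ hy (hy b), M.hy_cov hlam hδ h0 l k t ht,
      ← hc]
    simp only [M.y_cov hlam h0 hδ n, vecMul, dotProduct, Finset.mul_sum, mul_assoc]
    simp
  have h1 : cv (M.er l k t n) (M.er l k t n) = cv (M.er l k t n) (M.hEff l k t n) := by
    conv_lhs => rhs; unfold er
    rw [cv_sub_right hh hs (M.er_memLp hlam h0 l k t n), hHat_eq,
      cv_sum_right _ hy (M.er_memLp hlam h0 l k t n)]
    simp [horth]
  rw [h1]
  unfold er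
  rw [cv_sub_left hh hs hh, M.hh_cov hlam hδ, hHat_eq, cv_sum_left _ hy hh]
  have h2 : ∀ b, cv (M.y n b) (M.hEff l k t n) = (lam l k : ℂ) * ((Dmat δ t B)ᴴ *ᵥ x l k) b := by
    intro b
    rw [cv_star, M.hy_cov hlam hδ h0 l k t ht, star_mul']
    have : ((Dmat δ t B)ᴴ *ᵥ x l k) = star (star (x l k) ᵥ* Dmat δ t B) := by
      rw [Matrix.star_vecMul, star_star]
    rw [this]
    simp
  simp only [h2]
  rw [← Matrix.mulVec_mulVec, Matrix.dotProduct_mulVec]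
  change _ = (lam l k : ℂ) * (1 - (lam l k : ℂ) * (cf l k t M ⬝ᵥ _))
  rw [mul_sub, mul_one]
  congr 1
  simp only [dotProduct, Finset.mul_sum]
  exact Finset.sum_congr rfl fun b _ => by ring
end prob
end MIMOModel

/-- **Error covariance and MSE of the LMMSE estimator (Theorem 1).** For all `l, k`,
`E[(h_{jlk}(t) − ĥ_{jlk}(t))(h_{jlk}(t) − ĥ_{jlk}(t))ᴴ]
  = λ_{jlk}(1 − λ_{jlk} x̃_{lk}ᴴ D_{δ(t)} Ψ_j⁻¹ D_{δ(t)}ᴴ x̃_{lk}) · I_N`, and the MSE is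
`N λ_{jlk}(1 − λ_{jlk} x̃_{lk}ᴴ D_{δ(t)} Ψ_j⁻¹ D_{δ(t)}ᴴ x̃_{lk})`. -/
theorem lmmse_error_covariance
    {Ω : Type*} [MeasureSpace Ω] [IsProbabilityMeasure (ℙ : Measure Ω)]
    {N B L K : ℕ} {lam : Fin L → Fin K → ℝ} {σ2 ξ κ δ : ℝ}
    {x : Fin L → Fin K → Fin B → ℂ}
    (M : MIMOModel Ω N B L K lam σ2 ξ κ δ x)
    (hlam : ∀ l k, 0 < lam l k) (hσ2 : 0 < σ2) (hξ : 1 ≤ ξ) (hκ : 0 ≤ κ) (hδ : 0 ≤ δ)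
    (t : ℕ) (ht : B ≤ t) :
    ∀ l : Fin L, ∀ k : Fin K,
      ((Matrix.of fun n₁ n₂ : Fin N =>
          ∫ ω, (M.hEff l k t n₁ ω - M.hHat l k t n₁ ω)
            * star (M.hEff l k t n₂ ω - M.hHat l k t n₂ ω))
        = (((lam l k : ℝ) : ℂ) * (1 - ((lam l k : ℝ) : ℂ)
            * (star (x l k) ⬝ᵥ (Dmat δ t B * (PsiMat lam σ2 ξ κ δ x)⁻¹
                * (Dmat δ t B)ᴴ).mulVec (x l k))))
          • (1 : Matrix (Fin N) (Fin N) ℂ)) ∧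
      ((∫ ω, ∑ n, Complex.normSq (M.hEff l k t n ω - M.hHat l k t n ω) : ℝ) : ℂ)
        = (N : ℂ) * ((lam l k : ℝ) : ℂ) * (1 - ((lam l k : ℝ) : ℂ)
            * (star (x l k) ⬝ᵥ (Dmat δ t B * (PsiMat lam σ2 ξ κ δ x)⁻¹
                * (Dmat δ t B)ᴴ).mulVec (x l k))) := by
  intro l k
  have h0 : 0 < σ2 * ξ := by positivity
  constructor
  · ext n₁ n₂
    rw [Matrix.of_apply, Matrix.smul_apply, smul_eq_mul]
    change MIMOModel.cv (M.er l k t n₁) (M.er l k t n₂) = _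
    by_cases h : n₁ = n₂
    · subst h
      rw [M.er_cov hlam h0 hδ l k t ht, Matrix.one_apply_eq, mul_one]
    · rw [M.er_cov_ne hlam h0 l k t h, Matrix.one_apply_ne h, mul_zero]
  · have hi : ∀ n, Integrable (fun ω => Complex.normSq (M.er l k t n ω)) ℙ := by
      intro n
      have h := (memLp_two_iff_integrable_sq_norm
        (M.er_memLp hlam h0 l k t n).aestronglyMeasurable).1 (M.er_memLp hlam h0 l k t n)
      simpa [Complex.normSq_eq_norm_sq] using h
    change ((∫ ω, ∑ n, Complex.normSq (M.er l k t n ω) : ℝ) : ℂ) = _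
    rw [integral_finsetSum _ fun n _ => hi n, Complex.ofReal_sum]
    have h : ∀ n, ((∫ ω, Complex.normSq (M.er l k t n ω) : ℝ) : ℂ)
        = MIMOModel.cv (M.er l k t n) (M.er l k t n) := by
      intro n
      rw [MIMOModel.cv, ← integral_complex_ofReal]
      congr 1
      funext ω
      rw [← starRingEnd_apply, Complex.mul_conj]
    simp_rw [h, M.er_cov hlam h0 hδ l k t ht]
    rw [Finset.sum_const, Finset.card_univ, Fintype.card_fin, nsmul_eq_mul]
    ring
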